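/- For every x < 0, the function G_x(s) = (1/2)s^2 - (3/4)|s - x|^{4/3} attains its global minimum on R exactly at the point s = v^+(x), so that m(x) = (1/2)v^+(x)^2 - (3/4)(v^+(x) - x)^{4/3}. Symmetrically, for every x > 0, G_x attains its global minimum exactly at s = v^-(x), so that m(x) = (1/2)v^-(x)^2 - (3/4)(x - v^-(x))^{4/3}. -/

import Mathlib

/-!
Write `s = x + t³`. Completing the square gives `G_x(s) = ½(s - t)² + W_x(t)`, where
`W_x(t) = ¼t⁴ - ½t² + xt` is a tilted double well whose critical points are the roots of
`t - t³ = x`. The root `v` of sign opposite to `x` is the bottom of the deeper well, and at `t = v`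
the square vanishes as well, because `x + v³ = v`.
-/

section Order

variable {α β : Type*} {f : α → β} {a : α}

lemma setOf_forall_le_eq_singleton [Preorder β] (h : ∀ b ≠ a, f a < f b) :
    {b | ∀ c, f b ≤ f c} = {a} := by
  ext b
  constructor
  · intro hb
    by_contra hba
    exact (h b hba).not_ge (hb a)
  · rintro rfl c
    obtain rfl | hc := eq_or_ne c b
    exacts [le_rfl, (h c hc).le]

lemma iInf_eq_of_forall_le [ConditionallyCompleteLattice β] (h : ∀ b, f a ≤ f b) :
    ⨅ b, f b = f a :=
  IsLeast.csInf_eq ⟨Set.mem_range_self a, Set.forall_mem_range.mpr h⟩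

end Order

lemma surjective_pow_of_odd {n : ℕ} (hn : Odd n) : Function.Surjective fun t : ℝ => t ^ n := by
  intro y
  obtain hy | hy := le_total 0 y
  · exact ⟨y ^ (n : ℝ)⁻¹, Real.rpow_inv_natCast_pow hy hn.pos.ne'⟩
  · refine ⟨-(-y) ^ (n : ℝ)⁻¹, ?_⟩
    dsimp only
    rw [hn.neg_pow, Real.rpow_inv_natCast_pow (neg_nonneg.mpr hy) hn.pos.ne', neg_neg]

lemma abs_pow_rpow_div {n : ℕ} (hn : n ≠ 0) (t p : ℝ) : |t ^ n| ^ (p / n) = |t| ^ p := by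
  rw [abs_pow, ← Real.rpow_natCast_mul (abs_nonneg t),
    mul_div_cancel₀ p (Nat.cast_ne_zero.mpr hn)]

lemma one_lt_sq_of_sub_pow_three_mul_neg {R : Type*} [CommRing R] [LinearOrder R]
    [IsStrictOrderedRing R] {v : R} (h : (v - v ^ 3) * v < 0) : 1 < v ^ 2 := by
  have hfactor : v ^ 2 * (1 - v ^ 2) < 0 := by
    linear_combination h
  exact sub_neg.mp (neg_of_mul_neg_right hfactor (sq_nonneg v))

section Field

variable {K : Type*} [Field K] {x v t : K}

/-- The tilted double well `W_x`, with the parameter `x` as the slope of the tilt. Its minimum over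
`t` is that of the function `G_x` of the theorem. -/
def tiltedDoubleWell (x t : K) : K :=
  t ^ 4 / 4 - t ^ 2 / 2 + x * t

lemma tiltedDoubleWell_sub [CharZero K] (hroot : v - v ^ 3 = x) (t : K) :
    tiltedDoubleWell x t - tiltedDoubleWell x v =
      (t - v) ^ 2 / 4 * ((t + v) ^ 2 + 2 * (v ^ 2 - 1)) := by
  subst hroot
  unfold tiltedDoubleWell
  ring

lemma tiltedDoubleWell_lt [LinearOrder K] [IsStrictOrderedRing K] (hroot : v - v ^ 3 = x)
    (hxv : x * v < 0) (ht : t ≠ v) :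
    tiltedDoubleWell x v < tiltedDoubleWell x t := by
  have htv : 0 < (t - v) ^ 2 := sq_pos_of_ne_zero (sub_ne_zero.mpr ht)
  have hv : 0 < v ^ 2 - 1 :=
    sub_pos.mpr (one_lt_sq_of_sub_pow_three_mul_neg (by rwa [hroot]))
  rw [← sub_pos, tiltedDoubleWell_sub hroot]
  exact mul_pos (div_pos htv four_pos)
    (add_pos_of_nonneg_of_pos (sq_nonneg _) (mul_pos two_pos hv))

end Field

/-- The function `G_x` whose infimum over `s` is the value `m(x)` of the minmax solution. -/
noncomputable def minmaxObjective (x s : ℝ) : ℝ :=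
  (1 / 2) * s ^ 2 - (3 / 4) * |s - x| ^ ((4 : ℝ) / 3)

lemma minmaxObjective_add_pow_three (x t : ℝ) :
    minmaxObjective x (x + t ^ 3) = (x + t ^ 3 - t) ^ 2 / 2 + tiltedDoubleWell x t := by
  have hpow : |t ^ 3| ^ ((4 : ℝ) / 3) = t ^ 4 := by
    calc
      |t ^ 3| ^ ((4 : ℝ) / 3) = |t| ^ (4 : ℝ) := mod_cast abs_pow_rpow_div three_ne_zero t 4
      _ = t ^ 4 := by rw [Real.rpow_ofNat, Even.pow_abs (by decide)]
  rw [minmaxObjective, add_sub_cancel_left, hpow, tiltedDoubleWell]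
  ring

lemma minmaxObjective_eq_tiltedDoubleWell {x v : ℝ} (hroot : v - v ^ 3 = x) :
    minmaxObjective x v = tiltedDoubleWell x v := by
  have hv : x + v ^ 3 = v := by rw [← hroot, sub_add_cancel]
  simpa [hv] using minmaxObjective_add_pow_three x v

lemma minmaxObjective_lt {x v s : ℝ} (hroot : v - v ^ 3 = x) (hxv : x * v < 0) (hs : s ≠ v) :
    minmaxObjective x v < minmaxObjective x s := by
  obtain ⟨t, ht⟩ := surjective_pow_of_odd (n := 3) (by decide) (s - x)
  obtain rfl : s = x + t ^ 3 := (add_eq_of_eq_sub' ht).symm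
  have htv : t ≠ v := by
    rintro rfl
    exact hs (by rw [← hroot, sub_add_cancel])
  calc
    minmaxObjective x v = tiltedDoubleWell x v := minmaxObjective_eq_tiltedDoubleWell hroot
    _ < tiltedDoubleWell x t := tiltedDoubleWell_lt hroot hxv htv
    _ ≤ (x + t ^ 3 - t) ^ 2 / 2 + tiltedDoubleWell x t := le_add_of_nonneg_left (by positivity)
    _ = minmaxObjective x (x + t ^ 3) := (minmaxObjective_add_pow_three x t).symm

lemma setOf_forall_minmaxObjective_le {x v : ℝ} (hroot : v - v ^ 3 = x) (hxv : x * v < 0) :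
    {s | ∀ r, minmaxObjective x s ≤ minmaxObjective x r} = {v} :=
  setOf_forall_le_eq_singleton fun _ => minmaxObjective_lt hroot hxv

lemma iInf_minmaxObjective {x v : ℝ} (hroot : v - v ^ 3 = x) (hxv : x * v < 0) :
    ⨅ s, minmaxObjective x s = minmaxObjective x v :=
  have hmin : ∀ r, minmaxObjective x v ≤ minmaxObjective x r :=
    (setOf_forall_minmaxObjective_le hroot hxv).ge rfl
  iInf_eq_of_forall_le hmin

/-- For `x < 0` the function `G_x(s) = ½s² - ¾|s-x|^{4/3}` attains its global minimum
exactly at the unique positive root `v⁺(x)` of `v - v³ = x`, so that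
`m(x) = ½ v⁺(x)² - ¾ (v⁺(x) - x)^{4/3}`; symmetrically for `x > 0` with the unique
negative root `v⁻(x)`. -/
theorem minimizer_of_Gx :
    let G : ℝ → ℝ → ℝ := fun x s =>
      (1 / 2) * s ^ 2 - (3 / 4) * |s - x| ^ ((4 : ℝ) / 3)
    let m : ℝ → ℝ := fun x => ⨅ s : ℝ, G x s
    (∀ x : ℝ, x < 0 → ∀ v : ℝ, 0 < v → v - v ^ 3 = x →
      {s : ℝ | ∀ r : ℝ, G x s ≤ G x r} = {v} ∧
      m x = (1 / 2) * v ^ 2 - (3 / 4) * (v - x) ^ ((4 : ℝ) / 3)) ∧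
    (∀ x : ℝ, 0 < x → ∀ v : ℝ, v < 0 → v - v ^ 3 = x →
      {s : ℝ | ∀ r : ℝ, G x s ≤ G x r} = {v} ∧
      m x = (1 / 2) * v ^ 2 - (3 / 4) * (x - v) ^ ((4 : ℝ) / 3)) := by
  intro G m
  refine ⟨fun x hx v hv hroot => ?_, fun x hx v hv hroot => ?_⟩
  · have hxv : x * v < 0 := mul_neg_of_neg_of_pos hx hv
    rw [← abs_of_pos (show 0 < v - x by linarith)]
    exact ⟨setOf_forall_minmaxObjective_le hroot hxv, iInf_minmaxObjective hroot hxv⟩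
  · have hxv : x * v < 0 := mul_neg_of_pos_of_neg hx hv
    rw [← abs_of_pos (show 0 < x - v by linarith), abs_sub_comm x v]
    exact ⟨setOf_forall_minmaxObjective_le hroot hxv, iInf_minmaxObjective hroot hxv⟩
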